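/- Let φ : [0,∞) → E be a continuously differentiable curve in a real normed vector space E with ‖φ'(t)‖ ≤ G₁ for all t ≥ 0, let κ > 0, and let Y : [0,∞) → E solve the relaxation equation Y'(t) = κ·(φ(t) − Y(t)). Then for every t ≥ 0, ‖Y(t) − φ(t)‖ ≤ e^{−κt}·‖Y(0) − φ(0)‖ + G₁/κ. -/

import Mathlib

/-- Slow–fast tracking estimate: if `Y` solves the relaxation equation
`Y' = κ • (φ - Y)` toward a continuously differentiable target `φ` whose
derivative is bounded by `G₁`, then
`‖Y t - φ t‖ ≤ e^{-κ t} ‖Y 0 - φ 0‖ + G₁ / κ` for all `t ≥ 0`. -/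
theorem relaxation_tracking
    {E : Type*} [NormedAddCommGroup E] [NormedSpace ℝ E]
    (φ φ' Y : ℝ → E) (κ G₁ : ℝ) (hκ : 0 < κ)
    (hφ : ∀ t, 0 ≤ t → HasDerivAt φ (φ' t) t)
    (hφcont : ContinuousOn φ' (Set.Ici (0 : ℝ)))
    (hbound : ∀ t, 0 ≤ t → ‖φ' t‖ ≤ G₁)
    (hY : ∀ t, 0 ≤ t → HasDerivAt Y (κ • (φ t - Y t)) t) :
    ∀ t, 0 ≤ t →
      ‖Y t - φ t‖ ≤ Real.exp (-κ * t) * ‖Y 0 - φ 0‖ + G₁ / κ := by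
  intro t ht
  have hexp (s : ℝ) : HasDerivAt (fun s => Real.exp (κ * s)) (κ * Real.exp (κ * s)) s := by
    simpa [mul_comm] using ((hasDerivAt_id s).const_mul κ).exp
  have hf (s : ℝ) (hs : 0 ≤ s) :
      HasDerivAt (fun s => Real.exp (κ * s) • (Y s - φ s)) (-(Real.exp (κ * s) • φ' s)) s := by
    refine ((hexp s).smul ((hY s hs).sub (hφ s hs))).congr_deriv ?_
    simp only [Pi.sub_apply]
    module
  have hB (s : ℝ) :
      HasDerivAt (fun s => ‖Y 0 - φ 0‖ + G₁ / κ * (Real.exp (κ * s) - 1))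
        (Real.exp (κ * s) * G₁) s := by
    refine ((((hexp s).sub_const 1).const_mul (G₁ / κ)).const_add _).congr_deriv ?_
    field_simp
  have hweighted := image_norm_le_of_norm_deriv_right_le_deriv_boundary
    (a := 0) (b := t)
    (fun s hs => (hf s hs.1).continuousAt.continuousWithinAt)
    (fun s hs => (hf s hs.1).hasDerivWithinAt)
    (by simp) hB
    (fun s hs => by
      rw [norm_neg, norm_smul, Real.norm_eq_abs, Real.abs_exp]
      exact mul_le_mul_of_nonneg_left (hbound s hs.1) (Real.exp_pos _).le)
    (Set.right_mem_Icc.2 ht)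
  rw [norm_smul, Real.norm_eq_abs, Real.abs_exp] at hweighted
  have hG : 0 ≤ G₁ / κ := div_nonneg ((norm_nonneg _).trans (hbound 0 le_rfl)) hκ.le
  have hinv : Real.exp (κ * t) * Real.exp (-κ * t) = 1 := by
    rw [← Real.exp_add]
    simp
  refine le_of_mul_le_mul_left (hweighted.trans ?_) (Real.exp_pos (κ * t))
  rw [mul_add, ← mul_assoc, hinv]
  linarith
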